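/- Let Ω be a nonempty open subset of ℝⁿ and let (Λ, ≤) be a right directed partially ordered set that is countably co-final, i.e., there exists a map ℕ → Λ, i ↦ λ_i, which is an order isomorphic embedding (i ≤ j iff λ_i ≤ λ_j) and whose image is cofinal in Λ (for every λ ∈ Λ there is i ∈ ℕ with λ ≤ λ_i). For Λ-indexed families w = (w_λ)_{λ∈Λ} of smooth real-valued functions on Ω, define: w ∈ I_{L,nd} iff there exists a closed nowhere dense set Γ ⊆ Ω such that for each x ∈ Ω \ Γ there is λ ∈ Λ with w_μ(x) = 0 for all μ ≥ λ; and w ∈ J_{L,B-I} iff the same condition holds with Γ replaced by some meagre set Σ ⊆ Ω. Then J_{L,B-I} = I_{L,nd}. -/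

import Mathlib

open Set

/-- `G` is a closed nowhere dense subset of `Om`: it is contained in `Om`, closed in the
subspace topology of `Om` (its closure meets `Om` only inside `G`), and has empty interior
(for `G ⊆ Om` with `Om` open, the interior relative to `Om` coincides with the interior). -/
def ClosedNwdIn {n : ℕ} (G Om : Set (Fin n → ℝ)) : Prop :=
  G ⊆ Om ∧ closure G ∩ Om ⊆ G ∧ interior G = ∅

/-- `S` is meagre (of first Baire category) in `Om`: it is contained in a countable union
of closed nowhere dense subsets of `Om`. -/
def MeagreIn {n : ℕ} (S Om : Set (Fin n → ℝ)) : Prop :=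
  S ⊆ Om ∧ ∃ C : ℕ → Set (Fin n → ℝ), (∀ k, ClosedNwdIn (C k) Om) ∧ S ⊆ ⋃ k, C k

/-- Baire's theorem in an open set `V`: if countably many sets, each closed relative to `V`,
cover the nonempty open set `V`, then one of them has an interior point in `V`. -/
theorem exists_interior_inter_nonempty_of_subset_iUnion {X ι : Type*} [TopologicalSpace X]
    [BaireSpace X] [Countable ι] {V : Set X} (hV : IsOpen V) (hne : V.Nonempty)
    {C : ι → Set X} (hC : ∀ i, closure (C i) ∩ V ⊆ C i) (hcov : V ⊆ ⋃ i, C i) :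
    ∃ i, (interior (C i) ∩ V).Nonempty := by
  let D : Option ι → Set X := fun o => o.elim Vᶜ fun i => closure (C i)
  have hDclosed : ∀ o, IsClosed (D o) := by
    rintro (_ | i)
    · exact hV.isClosed_compl
    · exact isClosed_closure
  have hDcov : ⋃ o, D o = univ := by
    refine eq_univ_of_forall fun x => mem_iUnion.2 ?_
    by_cases hx : x ∈ V
    · obtain ⟨i, hi⟩ := mem_iUnion.1 (hcov hx)
      exact ⟨some i, subset_closure hi⟩
    · exact ⟨none, hx⟩
  obtain ⟨x, hxV, hx⟩ :=
    (dense_iUnion_interior_of_closed hDclosed hDcov).inter_open_nonempty V hV hne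
  obtain ⟨_ | i, hi⟩ := mem_iUnion.1 hx
  · exact absurd hxV (interior_subset hi)
  · refine ⟨i, x, ?_, hxV⟩
    exact interior_maximal (fun y hy => hC i ⟨interior_subset hy.1, hy.2⟩)
      (isOpen_interior.inter hV) ⟨hi, hxV⟩

/-- The common zero set of functions continuous on `U` is closed relative to `U`. -/
theorem closure_inter_subset_of_continuousOn_eq_zero {X ι : Type*} [TopologicalSpace X]
    {U : Set X} {f : ι → X → ℝ} (hf : ∀ b, ContinuousOn (f b) U) (p : ι → Prop) :
    closure {x | x ∈ U ∧ ∀ b, p b → f b x = 0} ∩ U ⊆ {x | x ∈ U ∧ ∀ b, p b → f b x = 0} := by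
  rintro x ⟨hx, hxU⟩
  refine ⟨hxU, fun b hb => ?_⟩
  have hmem : f b x ∈ closure ({0} : Set ℝ) :=
    ((hf b x hxU).mono fun _ hy => hy.1).mem_closure hx fun y hy => hy.2 b hb
  simpa using hmem

/-- The complement in `Om` of the union of the interiors of relatively closed sets that cover `Om`
up to a meagre set is closed nowhere dense in `Om`. -/
theorem closedNwdIn_diff_iUnion_interior {n : ℕ} {Om S : Set (Fin n → ℝ)}
    (hS : MeagreIn S Om) {F : ℕ → Set (Fin n → ℝ)} (hF : ∀ i, closure (F i) ∩ Om ⊆ F i)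
    (hcov : Om \ S ⊆ ⋃ i, F i) : ClosedNwdIn (Om \ ⋃ i, interior (F i)) Om := by
  obtain ⟨-, C, hC, hSC⟩ := hS
  have hU : IsOpen (⋃ i, interior (F i)) := isOpen_iUnion fun _ => isOpen_interior
  refine ⟨sdiff_subset, ?_, ?_⟩
  · rintro x ⟨hx, hxO⟩
    exact ⟨hxO, closure_minimal (fun y hy => hy.2) hU.isClosed_compl hx⟩
  · by_contra hne
    set V := interior (Om \ ⋃ i, interior (F i))
    have hVsub : V ⊆ Om \ ⋃ i, interior (F i) := interior_subset
    obtain ⟨i | k, x, hx, hxV⟩ := exists_interior_inter_nonempty_of_subset_iUnion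
        (C := Sum.elim F C) isOpen_interior (nonempty_iff_ne_empty.2 hne)
        (by
          rintro (i | k) x ⟨hx, hxV⟩
          · exact hF i ⟨hx, (hVsub hxV).1⟩
          · exact (hC k).2.1 ⟨hx, (hVsub hxV).1⟩)
        (by
          intro x hxV
          by_cases hxS : x ∈ S
          · obtain ⟨k, hk⟩ := mem_iUnion.1 (hSC hxS)
            exact mem_iUnion.2 ⟨Sum.inr k, hk⟩
          · obtain ⟨i, hi⟩ := mem_iUnion.1 (hcov ⟨(hVsub hxV).1, hxS⟩)
            exact mem_iUnion.2 ⟨Sum.inl i, hi⟩)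
    · exact (hVsub hxV).2 (mem_iUnion.2 ⟨i, hx⟩)
    · have hx' : x ∈ interior (C k) := hx
      rw [(hC k).2.2] at hx'
      exact hx'

/-- Theorem 1 of the paper. Let `Om ⊆ ℝⁿ` be nonempty open and `(Λ, ≤)` a
right directed partially ordered set which is countably co-final: there is `lam : ℕ → Λ` which
is an order isomorphic embedding (`i ≤ j ↔ lam i ≤ lam j`) whose image is cofinal in `Λ`.
For `Λ`-indexed families of smooth functions, the ideal defined by eventual vanishing off some
meagre set coincides with the one defined by eventual vanishing off some closed nowhere dense
set: `J_{L,B-I} = I_{L,nd}`. -/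
theorem stmt5 (n : ℕ) (Om : Set (Fin n → ℝ)) (hOm : IsOpen Om) (hne : Om.Nonempty)
    (Λ : Type*) [PartialOrder Λ]
    (hdir : ∀ a b : Λ, ∃ c : Λ, a ≤ c ∧ b ≤ c)
    (lam : ℕ → Λ) (hemb : ∀ i j : ℕ, i ≤ j ↔ lam i ≤ lam j)
    (hcof : ∀ a : Λ, ∃ i : ℕ, a ≤ lam i) :
    {w : Λ → (Fin n → ℝ) → ℝ | (∀ a, ContDiffOn ℝ (⊤ : ℕ∞) (w a) Om) ∧
        ∃ S : Set (Fin n → ℝ), MeagreIn S Om ∧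
          ∀ x ∈ Om \ S, ∃ a : Λ, ∀ b : Λ, a ≤ b → w b x = 0} =
    {w : Λ → (Fin n → ℝ) → ℝ | (∀ a, ContDiffOn ℝ (⊤ : ℕ∞) (w a) Om) ∧
        ∃ G : Set (Fin n → ℝ), ClosedNwdIn G Om ∧
          ∀ x ∈ Om \ G, ∃ a : Λ, ∀ b : Λ, a ≤ b → w b x = 0} := by
  ext w
  constructor
  · rintro ⟨hw, S, hS, hvan⟩
    let F : ℕ → Set (Fin n → ℝ) := fun i => {x | x ∈ Om ∧ ∀ b, lam i ≤ b → w b x = 0}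
    refine ⟨hw, Om \ ⋃ i, interior (F i), closedNwdIn_diff_iUnion_interior hS (fun i =>
      closure_inter_subset_of_continuousOn_eq_zero (fun b => (hw b).continuousOn) _) ?_, ?_⟩
    · intro x hx
      obtain ⟨a, ha⟩ := hvan x hx
      obtain ⟨i, hi⟩ := hcof a
      exact mem_iUnion.2 ⟨i, hx.1, fun b hb => ha b (hi.trans hb)⟩
    · rintro x ⟨hxO, hx⟩
      obtain ⟨i, hi⟩ := mem_iUnion.1 (not_not.1 fun h => hx ⟨hxO, h⟩)
      exact ⟨lam i, (interior_subset hi).2⟩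
  · rintro ⟨hw, G, hG, hvan⟩
    exact ⟨hw, G, ⟨hG.1, fun _ => G, fun _ => hG, subset_iUnion (fun _ : ℕ => G) 0⟩, hvan⟩
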